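/- Suppose γ ≥ h. Then lim_{α↓0} α^h·J(α) = ∫_0^∞ exp{c·μ·s·𝟙{γ = h} − μ·F^{(k)}(0)·s^{k+1}/(k+1)!} ds and lim_{α↓0} α^{2h}·J₁(α) = ∫_0^∞ s·exp{c·μ·s·𝟙{γ = h} − μ·F^{(k)}(0)·s^{k+1}/(k+1)!} ds. -/

import Mathlib

open Filter Set Topology MeasureTheory

open scoped Classical

/-- `J(α) = ∫_0^∞ exp{λ(α) ∫_0^x F̄(α u) du - μ x} dx` for the `M/M/1+GI` queue
with `ρ(α) = 1 + c α^γ`, `λ(α) = ρ(α) μ`, patience CDF `x ↦ F(α x)`. -/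
noncomputable def Jq (F : ℝ → ℝ) (μ c γ α : ℝ) : ℝ :=
  ∫ x in Set.Ioi (0 : ℝ),
    Real.exp ((1 + c * α ^ γ) * μ * (∫ u in (0 : ℝ)..x, (1 - F (α * u))) - μ * x)

/-- `J₁(α) = ∫_0^∞ x exp{λ(α) ∫_0^x F̄(α u) du - μ x} dx`. -/
noncomputable def J1q (F : ℝ → ℝ) (μ c γ α : ℝ) : ℝ :=
  ∫ x in Set.Ioi (0 : ℝ),
    x * Real.exp ((1 + c * α ^ γ) * μ * (∫ u in (0 : ℝ)..x, (1 - F (α * u))) - μ * x)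

/-- A Peano-form Taylor expansion: if the derivatives of `F` of order less than `k` vanish at `0`,
then `F v / v ^ k` tends to `F^{(k)}(0) / k!` as `v` decreases to `0`. -/
lemma tendsto_div_pow_of_iteratedDerivWithin_eq_zero {F : ℝ → ℝ} {k : ℕ}
    (hF : ContDiffOn ℝ k F (Ici 0))
    (hF_derivs : ∀ j < k, iteratedDerivWithin j F (Ici 0) 0 = 0) :
    Tendsto (fun v => F v / v ^ k) (𝓝[>] 0)
      (𝓝 (iteratedDerivWithin k F (Ici 0) 0 / k.factorial)) := by
  have h := (Real.taylor_tendsto (convex_Ici 0) self_mem_Ici hF).mono_left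
    (nhdsWithin_mono 0 Ioi_subset_Ici_self)
  have h_add := h.add_const (iteratedDerivWithin k F (Ici 0) 0 / k.factorial)
  rw [zero_add] at h_add
  refine h_add.congr' ?_
  filter_upwards [self_mem_nhdsWithin] with v (hv : 0 < v)
  rw [taylor_within_apply, Finset.sum_range_succ, Finset.sum_eq_zero]
  · have : v ^ k ≠ 0 := by positivity
    simp only [sub_zero, smul_eq_mul, zero_add]
    field_simp
    ring
  · intro j hj
    rw [hF_derivs j (Finset.mem_range.mp hj), smul_zero]

/-- Integrating the asymptotics `F v ~ a v ^ k` at `0+`. -/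
lemma tendsto_integral_div_pow {F : ℝ → ℝ} (hF : Continuous F) {k : ℕ} {a : ℝ}
    (h : Tendsto (fun v => F v / v ^ k) (𝓝[>] 0) (𝓝 a)) :
    Tendsto (fun y => (∫ v in (0 : ℝ)..y, F v) / y ^ (k + 1)) (𝓝[>] 0)
      (𝓝 (a / (k + 1))) := by
  have hG : ∀ y, HasDerivAt (fun y => ∫ v in (0 : ℝ)..y, F v) (F y) y :=
    fun y => hF.integral_hasStrictDerivAt 0 y |>.hasDerivAt
  have hP : ∀ y : ℝ, HasDerivAt (fun y : ℝ => y ^ (k + 1)) ((k + 1) * y ^ k) y := fun y => by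
    simpa using hasDerivAt_pow (k + 1) y
  refine HasDerivAt.lhopital_zero_nhdsGT (.of_forall hG) (.of_forall hP) ?_ ?_ ?_ ?_
  · filter_upwards [self_mem_nhdsWithin] with y (hy : 0 < y)
    positivity
  · simpa using (hG 0).continuousAt.tendsto.mono_left nhdsWithin_le_nhds
  · simpa using (hP 0).continuousAt.tendsto.mono_left nhdsWithin_le_nhds
  · refine (h.div_const ((k : ℝ) + 1)).congr fun y => ?_
    rw [div_div, mul_comm]

/-- The primitive of a nonnegative monotone function lies above its tangent lines. -/
lemma mul_sub_le_integral_of_monotone {F : ℝ → ℝ} (hF : Monotone F) (hF0 : ∀ x, 0 ≤ F x)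
    {y z : ℝ} (hy : 0 ≤ y) (hz : 0 ≤ z) :
    F z * (y - z) ≤ ∫ v in (0 : ℝ)..y, F v := by
  rcases le_total z y with hzy | hyz
  · rw [← intervalIntegral.integral_add_adjacent_intervals
      (hF.intervalIntegrable (a := 0) (b := z)) (hF.intervalIntegrable (a := z) (b := y))]
    have h₁ : 0 ≤ ∫ v in (0 : ℝ)..z, F v :=
      intervalIntegral.integral_nonneg hz fun v _ => hF0 v
    have h₂ : ∫ _ in z..y, F z ≤ ∫ v in z..y, F v :=
      intervalIntegral.integral_mono_on hzy intervalIntegrable_const hF.intervalIntegrable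
        fun v hv => hF hv.1
    rw [intervalIntegral.integral_const, smul_eq_mul, mul_comm] at h₂
    linarith
  · exact (mul_nonpos_of_nonneg_of_nonpos (hF0 z) (by linarith)).trans
      (intervalIntegral.integral_nonneg hy fun v _ => hF0 v)

/-- The rescaled primitive `G (ε s) / ε ^ (k + 1)` eventually dominates, uniformly in `s ≥ 0`,
an affine function of arbitrarily large slope. -/
lemma exists_eventually_affine_le {F : ℝ → ℝ} (hF : Monotone F) (hF0 : ∀ x, 0 ≤ F x)
    {k : ℕ} (hk : 1 ≤ k) {a : ℝ} (ha : 0 < a)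
    (h : Tendsto (fun v => F v / v ^ k) (𝓝[>] 0) (𝓝 a)) {A : ℝ} (hA : 0 ≤ A) :
    ∃ S : ℝ, ∀ᶠ ε in 𝓝[>] (0 : ℝ), ∀ s, 0 ≤ s →
      A * (s - S) ≤ (∫ v in (0 : ℝ)..(ε * s), F v) / ε ^ (k + 1) := by
  obtain ⟨S, hAS, hS⟩ : ∃ S : ℝ, A < a * S ^ k ∧ 0 < S :=
    (((tendsto_pow_atTop (by omega : k ≠ 0)).const_mul_atTop ha).eventually_gt_atTop A
      |>.and (eventually_gt_atTop 0)).exists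
  refine ⟨S, ?_⟩
  have hmul : Tendsto (fun ε : ℝ => ε * S) (𝓝[>] 0) (𝓝[>] 0) := by
    refine tendsto_nhdsWithin_iff.mpr ⟨?_, ?_⟩
    · simpa using (tendsto_id.mul_const S).mono_left (nhdsWithin_le_nhds (a := (0 : ℝ)))
    · filter_upwards [self_mem_nhdsWithin] with ε (hε : 0 < ε) using mul_pos hε hS
  have hlim := (h.comp hmul).mul_const (S ^ k)
  filter_upwards [hlim.eventually_const_lt hAS, self_mem_nhdsWithin] with ε hεA (hε : 0 < ε) s hs
  have hslope : A ≤ F (ε * S) / ε ^ k := by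
    refine hεA.le.trans_eq ?_
    simp only [Function.comp_apply, mul_pow]
    field_simp
  have hGnn : 0 ≤ ∫ v in (0 : ℝ)..(ε * s), F v :=
    intervalIntegral.integral_nonneg (by positivity) fun v _ => hF0 v
  rcases le_total S s with hSs | hsS
  · calc A * (s - S) ≤ F (ε * S) / ε ^ k * (s - S) :=
          mul_le_mul_of_nonneg_right hslope (by linarith)
      _ = F (ε * S) * (ε * s - ε * S) / ε ^ (k + 1) := by
          field_simp
          ring
      _ ≤ _ := by
          gcongr
          exact mul_sub_le_integral_of_monotone hF hF0 (by positivity) (by positivity)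
  · exact (mul_nonpos_of_nonneg_of_nonpos hA (by linarith)).trans (by positivity)

/-- Laplace-type limit for the rescaled integrals with polynomial weight `s ^ m`. -/
lemma tendsto_integral_pow_mul_exp {F : ℝ → ℝ} (hF : Monotone F) (hF0 : ∀ x, 0 ≤ F x)
    (hFc : Continuous F) {k : ℕ} (hk : 1 ≤ k) {a : ℝ} (ha : 0 < a)
    (h : Tendsto (fun v => F v / v ^ k) (𝓝[>] 0) (𝓝 a))
    {ι : Type*} {l : Filter ι} [l.IsCountablyGenerated] {ε lam κ : ι → ℝ} {μ κ₀ : ℝ} (hμ : 0 < μ)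
    (hε : Tendsto ε l (𝓝[>] 0)) (hlam : Tendsto lam l (𝓝 μ)) (hκ : Tendsto κ l (𝓝 κ₀)) (m : ℕ) :
    Tendsto (fun α => ∫ s in Ioi (0 : ℝ), s ^ m * Real.exp
        (κ α * s - lam α * ((∫ v in (0 : ℝ)..(ε α * s), F v) / ε α ^ (k + 1)))) l
      (𝓝 (∫ s in Ioi (0 : ℝ), s ^ m * Real.exp
        (κ₀ * s - μ * (a / (k + 1) * s ^ (k + 1))))) := by
  set A : ℝ := 2 * (|κ₀| + 2) / μ with hAdef
  have hA : 0 ≤ A := by positivity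
  obtain ⟨S, hS⟩ := exists_eventually_affine_le hF hF0 hk ha h hA
  have hprim : Continuous fun y => ∫ v in (0 : ℝ)..y, F v :=
    intervalIntegral.continuous_primitive (fun _ _ => hF.intervalIntegrable) 0
  refine tendsto_integral_filter_of_dominated_convergence
    (fun s => Real.exp ((|κ₀| + 2) * |S|) * (s ^ m * Real.exp (-s))) ?_ ?_ ?_ ?_
  · refine .of_forall fun α => Continuous.aestronglyMeasurable ?_
    have := hprim.comp (continuous_const_mul (ε α))
    simp only [Function.comp_def] at this
    fun_prop
  · have hκ_lt : ∀ᶠ α in l, κ α < |κ₀| + 1 :=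
      hκ.eventually_lt_const ((le_abs_self κ₀).trans_lt (lt_add_one _))
    have hlam₁ : ∀ᶠ α in l, μ / 2 < lam α := hlam.eventually_const_lt (half_lt_self hμ)
    filter_upwards [hκ_lt, hlam₁, hε.eventually hS, hε.eventually self_mem_nhdsWithin]
      with α hκα hlamα hSα (hεα : 0 < ε α)
    filter_upwards [ae_restrict_mem measurableSet_Ioi] with s (hs : 0 < s)
    rw [Real.norm_of_nonneg (by positivity), mul_left_comm, ← Real.exp_add]
    gcongr
    have hG := hSα s hs.le
    set g := (∫ v in (0 : ℝ)..(ε α * s), F v) / ε α ^ (k + 1)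
    have hg : 0 ≤ g := div_nonneg
      (intervalIntegral.integral_nonneg (by positivity) fun v _ => hF0 v) (by positivity)
    have h₁ : μ / 2 * g ≤ lam α * g := by gcongr
    have h₂ : μ / 2 * (A * (s - S)) ≤ μ / 2 * g := by gcongr
    have h₃ : μ / 2 * (A * (s - S)) = (|κ₀| + 2) * (s - S) := by
      rw [hAdef]; field_simp
    have h₄ : κ α * s ≤ (|κ₀| + 1) * s := by gcongr
    have h₅ : (|κ₀| + 2) * S ≤ (|κ₀| + 2) * |S| := by gcongr; exact le_abs_self S
    linarith
  · refine Integrable.const_mul ?_ _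
    refine (Real.GammaIntegral_convergent (s := m + 1) (by positivity)).congr_fun
      (fun s _ => ?_) measurableSet_Ioi
    simp [mul_comm]
  · filter_upwards [ae_restrict_mem measurableSet_Ioi] with s (hs : 0 < s)
    have hεs : Tendsto (fun α => ε α * s) l (𝓝[>] 0) := by
      rw [tendsto_nhdsWithin_iff] at hε ⊢
      refine ⟨by simpa using hε.1.mul_const s, ?_⟩
      filter_upwards [hε.2] with α hα using mul_pos hα hs
    have hlim := ((tendsto_integral_div_pow hFc h).comp hεs).mul_const (s ^ (k + 1))
    have hG : Tendsto (fun α => (∫ v in (0 : ℝ)..(ε α * s), F v) / ε α ^ (k + 1)) l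
        (𝓝 (a / (k + 1) * s ^ (k + 1))) := by
      refine hlim.congr fun α => ?_
      simp only [Function.comp_apply, mul_pow]
      field_simp
    exact ((Real.continuous_exp.tendsto _).comp
      ((hκ.mul_const s).sub (hlam.mul hG))).const_mul (s ^ m)

/-- The change of variables `x = s / ε ^ k` with `ε = α ^ (1 / (k + 1))` in the integrals `J` and
`J₁`. -/
lemma rescale_integral_pow_mul_exp {F : ℝ → ℝ} (hF : Monotone F) (k m : ℕ)
    (μ c γ : ℝ) {α ε : ℝ} (hε : 0 < ε) (hα : α = ε ^ (k + 1)) :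
    (ε ^ k) ^ (m + 1) * ∫ x in Ioi (0 : ℝ), x ^ m * Real.exp ((1 + c * α ^ γ) * μ *
        (∫ u in (0 : ℝ)..x, (1 - F (α * u))) - μ * x) =
      ∫ s in Ioi (0 : ℝ), s ^ m * Real.exp (c * μ * (α ^ γ / ε ^ k) * s -
        (1 + c * α ^ γ) * μ * ((∫ v in (0 : ℝ)..(ε * s), F v) / ε ^ (k + 1))) := by
  have hα0 : 0 < α := hα ▸ pow_pos hε _
  have hb : 0 < (ε ^ k)⁻¹ := by positivity
  have hsub := integral_comp_mul_left_Ioi' (fun x => x ^ m * Real.exp ((1 + c * α ^ γ) * μ *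
        (∫ u in (0 : ℝ)..x, (1 - F (α * u))) - μ * x)) 0 hb
  rw [mul_zero] at hsub
  rw [← hsub, smul_eq_mul, ← mul_assoc, pow_succ, mul_assoc ((ε ^ k) ^ m),
    mul_inv_cancel₀ (by positivity), mul_one, ← integral_const_mul]
  refine setIntegral_congr_fun measurableSet_Ioi fun s _ => ?_
  have hint : ∫ u in (0 : ℝ)..((ε ^ k)⁻¹ * s), (1 - F (α * u)) =
      (ε ^ k)⁻¹ * s - (∫ v in (0 : ℝ)..(ε * s), F v) / ε ^ (k + 1) := by
    have hmono : Monotone fun u => F (α * u) := fun x y hxy =>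
      hF (mul_le_mul_of_nonneg_left hxy hα0.le)
    rw [intervalIntegral.integral_sub intervalIntegrable_const hmono.intervalIntegrable,
      intervalIntegral.integral_const, intervalIntegral.integral_comp_mul_left _ hα0.ne',
      mul_zero, hα, show ε ^ (k + 1) * ((ε ^ k)⁻¹ * s) = ε * s by field_simp; ring]
    simp [div_eq_inv_mul]
  simp only [hint]
  rw [← mul_assoc, ← mul_pow, mul_inv_cancel_left₀ (by positivity)]
  congr 2
  field_simp
  ring

/-- Critical scaling of `∫ x ^ m exp{...} dx`, covering both `J` (`m = 0`) and `J₁` (`m = 1`). -/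
lemma tendsto_rpow_mul_integral_critical {F : ℝ → ℝ} {k : ℕ} (hk : 1 ≤ k)
    (hF_mono : Monotone F) (hF_zero : ∀ x ≤ (0 : ℝ), F x = 0)
    (hF_smooth : ContDiffOn ℝ k F (Ici 0))
    (hF_derivs : ∀ j < k, iteratedDerivWithin j F (Ici 0) 0 = 0)
    (hF_k : 0 < iteratedDerivWithin k F (Ici 0) 0)
    {μ γ : ℝ} (c : ℝ) (hμ : 0 < μ) (hγ : 0 < γ) (hγh : (k : ℝ) / (k + 1) ≤ γ) (m : ℕ) :
    Tendsto (fun α : ℝ => (α ^ ((k : ℝ) / (k + 1))) ^ (m + 1) *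
        ∫ x in Ioi (0 : ℝ), x ^ m * Real.exp ((1 + c * α ^ γ) * μ *
          (∫ u in (0 : ℝ)..x, (1 - F (α * u))) - μ * x)) (𝓝[>] 0)
      (𝓝 (∫ s in Ioi (0 : ℝ), s ^ m * Real.exp
        (c * μ * s * (if γ = (k : ℝ) / (k + 1) then (1 : ℝ) else 0)
          - μ * iteratedDerivWithin k F (Ici 0) 0 * s ^ (k + 1) / (Nat.factorial (k + 1))))) := by
  have hF0 : ∀ x, 0 ≤ F x := fun x => by
    rcases le_total x 0 with hx | hx
    · exact (hF_zero x hx).ge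
    · exact (hF_zero 0 le_rfl).ge.trans (hF_mono hx)
  have hFc : Continuous F := by
    rw [← continuousOn_univ, ← Iic_union_Ici (a := (0 : ℝ))]
    exact ContinuousOn.union_of_isClosed (continuousOn_const.congr hF_zero)
      hF_smooth.continuousOn isClosed_Iic isClosed_Ici
  have hid : Tendsto (fun α : ℝ => α) (𝓝[>] 0) (𝓝 0) := nhdsWithin_le_nhds
  have hrpow : ∀ {p : ℝ}, 0 < p → Tendsto (fun α : ℝ => α ^ p) (𝓝[>] 0) (𝓝 0) := fun {p} hp => by
    simpa [Real.zero_rpow hp.ne'] using hid.rpow_const (p := p) (.inr hp.le)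
  have hε : Tendsto (fun α : ℝ => α ^ ((k : ℝ) + 1)⁻¹) (𝓝[>] 0) (𝓝[>] 0) := by
    refine tendsto_nhdsWithin_iff.mpr ⟨hrpow (by positivity), ?_⟩
    filter_upwards [self_mem_nhdsWithin] with α (hα : 0 < α) using Real.rpow_pos_of_pos hα _
  have hεk : ∀ α : ℝ, 0 < α → (α ^ ((k : ℝ) + 1)⁻¹) ^ k = α ^ ((k : ℝ) / (k + 1)) :=
    fun α hα => by
      rw [← Real.rpow_natCast, ← Real.rpow_mul hα.le, div_eq_inv_mul]
  have hεk1 : ∀ α : ℝ, 0 < α → α = (α ^ ((k : ℝ) + 1)⁻¹) ^ (k + 1) := fun α hα => by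
    rw [← Real.rpow_natCast, ← Real.rpow_mul hα.le, Nat.cast_add_one,
      inv_mul_cancel₀ (by positivity), Real.rpow_one]
  have hlam : Tendsto (fun α : ℝ => (1 + c * α ^ γ) * μ) (𝓝[>] 0) (𝓝 μ) := by
    simpa using (((hrpow hγ).const_mul c).const_add 1).mul_const μ
  have hκ : Tendsto (fun α : ℝ => c * μ * (α ^ γ / (α ^ ((k : ℝ) + 1)⁻¹) ^ k)) (𝓝[>] 0)
      (𝓝 (c * μ * (if γ = (k : ℝ) / (k + 1) then (1 : ℝ) else 0))) := by
    refine Tendsto.const_mul _ ?_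
    have heq : ∀ᶠ α : ℝ in 𝓝[>] 0, α ^ (γ - (k : ℝ) / (k + 1)) =
        α ^ γ / (α ^ ((k : ℝ) + 1)⁻¹) ^ k := by
      filter_upwards [self_mem_nhdsWithin] with α (hα : 0 < α)
      rw [hεk α hα, Real.rpow_sub hα]
    refine Tendsto.congr' heq ?_
    split_ifs with hγeq
    · simp [hγeq]
    · exact hrpow (sub_pos.mpr (lt_of_le_of_ne hγh (Ne.symm hγeq)))
  have hmain := tendsto_integral_pow_mul_exp hF_mono hF0 hFc hk (by positivity)
    (tendsto_div_pow_of_iteratedDerivWithin_eq_zero hF_smooth hF_derivs) hμ hε hlam hκ m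
  have hlimit : ∀ s : ℝ, c * μ * (if γ = (k : ℝ) / (k + 1) then (1 : ℝ) else 0) * s -
      μ * (iteratedDerivWithin k F (Ici 0) 0 / k.factorial / (k + 1) * s ^ (k + 1)) =
      c * μ * s * (if γ = (k : ℝ) / (k + 1) then (1 : ℝ) else 0)
        - μ * iteratedDerivWithin k F (Ici 0) 0 * s ^ (k + 1) / (Nat.factorial (k + 1)) :=
    fun s => by
      rw [Nat.factorial_succ]
      push_cast
      field_simp
  simp only [hlimit] at hmain
  refine hmain.congr' ?_
  filter_upwards [self_mem_nhdsWithin] with α (hα : 0 < α)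
  rw [← rescale_integral_pow_mul_exp hF_mono k m μ c γ (Real.rpow_pos_of_pos hα _) (hεk1 α hα),
    hεk α hα]

/-- in the critically loaded regime (`γ ≥ h = k/(k+1)`),
`α^h J(α) → ∫_0^∞ exp{c μ s 𝟙{γ=h} - μ F^{(k)}(0) s^{k+1}/(k+1)!} ds` and
`α^{2h} J₁(α) → ∫_0^∞ s exp{c μ s 𝟙{γ=h} - μ F^{(k)}(0) s^{k+1}/(k+1)!} ds`. -/
theorem mm1gi_J_limits_critical
    (k : ℕ) (hk : 1 ≤ k)
    (F : ℝ → ℝ)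
    (hF_mono : Monotone F)
    (hF_zero : ∀ x ≤ (0 : ℝ), F x = 0)
    (hF_range : ∀ x, 0 ≤ x → 0 ≤ F x ∧ F x < 1)
    (hF_lim : Tendsto F atTop (𝓝 1))
    (hF_smooth : ContDiffOn ℝ k F (Set.Ici 0))
    (hF_derivs : ∀ j < k, iteratedDerivWithin j F (Set.Ici 0) 0 = 0)
    (hF_k : 0 < iteratedDerivWithin k F (Set.Ici 0) 0)
    (μ γ c : ℝ) (hμ : 0 < μ) (hγ : 0 < γ)
    (hγh : (k : ℝ) / (k + 1) ≤ γ)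
    (hJ : ∀ᶠ α in 𝓝[>] (0 : ℝ), IntegrableOn
      (fun x : ℝ => Real.exp ((1 + c * α ^ γ) * μ *
        (∫ u in (0 : ℝ)..x, (1 - F (α * u))) - μ * x)) (Set.Ioi 0))
    (hJ1 : ∀ᶠ α in 𝓝[>] (0 : ℝ), IntegrableOn
      (fun x : ℝ => x * Real.exp ((1 + c * α ^ γ) * μ *
        (∫ u in (0 : ℝ)..x, (1 - F (α * u))) - μ * x)) (Set.Ioi 0)) :
    Tendsto (fun α : ℝ => α ^ ((k : ℝ) / (k + 1)) * Jq F μ c γ α)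
      (𝓝[>] (0 : ℝ))
      (𝓝 (∫ s in Set.Ioi (0 : ℝ), Real.exp
        (c * μ * s * (if γ = (k : ℝ) / (k + 1) then (1 : ℝ) else 0)
          - μ * iteratedDerivWithin k F (Set.Ici 0) 0 * s ^ (k + 1)
            / (Nat.factorial (k + 1))))) ∧
    Tendsto (fun α : ℝ => α ^ (2 * ((k : ℝ) / (k + 1))) * J1q F μ c γ α)
      (𝓝[>] (0 : ℝ))
      (𝓝 (∫ s in Set.Ioi (0 : ℝ), s * Real.exp
        (c * μ * s * (if γ = (k : ℝ) / (k + 1) then (1 : ℝ) else 0)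
          - μ * iteratedDerivWithin k F (Set.Ici 0) 0 * s ^ (k + 1)
            / (Nat.factorial (k + 1))))) := by
  have h := tendsto_rpow_mul_integral_critical hk hF_mono hF_zero hF_smooth hF_derivs hF_k c hμ hγ hγh
  refine ⟨by simpa [Jq] using h 0, ?_⟩
  have h₁ := h 1
  simp only [pow_one] at h₁
  refine h₁.congr' ?_
  filter_upwards [self_mem_nhdsWithin] with α (hα : 0 < α)
  rw [J1q, mul_comm 2, Real.rpow_mul hα.le, Real.rpow_two]
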